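/- Let M₁, M₂ be ω-saturated Θ-models, let t ∈ U₁ and t' ∈ U₂ be such that tp_x(M₁,t) ⊆ tp_x(M₂,t'), and let x be a variable. Define A = {(a,b) : for some p,q with {p,q} = {1,2}, a ∈ U_p, b ∈ U_q and tp_x(M_p,a) ⊆ tp_x(M_q,b)} and B = {(a,b) : for some p,q with {p,q} = {1,2}, a ∈ U_p, b ∈ U_q and imp_x(M_q,b) ⊆ imp_x(M_p,a)}. Then (A,B) is a (2,2)-modal ⟨(M₁,t),(M₂,t')⟩-asimulation. -/

import Mathlib

namespace ModalIntAsim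

/-- Binary relation symbols of the correspondence vocabulary: R, R_□, R_◇. -/
inductive RelSym : Type
  | r | box | diam
deriving DecidableEq

/-- Formulas of the correspondence language: classical first-order logic without
identity, with variables indexed by `ℕ`, unary predicate letters `P n` (n : ℕ),
and the three binary relation symbols. -/
inductive FOForm : Type
  | falsum : FOForm
  | pred : ℕ → ℕ → FOForm            -- `pred n v` is `P_n(x_v)`
  | rel : RelSym → ℕ → ℕ → FOForm    -- `rel s v w` is `S(x_v, x_w)`
  | conj : FOForm → FOForm → FOForm
  | disj : FOForm → FOForm → FOForm
  | impl : FOForm → FOForm → FOForm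
  | all : ℕ → FOForm → FOForm
  | ex : ℕ → FOForm → FOForm

namespace FOForm

/-- Free variables of a correspondence formula. -/
def freeVars : FOForm → Finset ℕ
  | falsum => ∅
  | pred _ v => {v}
  | rel _ v w => {v, w}
  | conj f g => f.freeVars ∪ g.freeVars
  | disj f g => f.freeVars ∪ g.freeVars
  | impl f g => f.freeVars ∪ g.freeVars
  | all v f => f.freeVars \ {v}
  | ex v f => f.freeVars \ {v}

/-- The unary predicate letters occurring in a formula (the binary relation
symbols R, R_□, R_◇ are regarded as belonging to every vocabulary Σ_φ). -/
def predLetters : FOForm → Finset ℕ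
  | falsum => ∅
  | pred n _ => {n}
  | rel _ _ _ => ∅
  | conj f g => f.predLetters ∪ g.predLetters
  | disj f g => f.predLetters ∪ g.predLetters
  | impl f g => f.predLetters ∪ g.predLetters
  | all _ f => f.predLetters
  | ex _ f => f.predLetters

/-- Degree of a formula: the greatest number of nested quantifiers. -/
def degree : FOForm → ℕ
  | falsum => 0
  | pred _ _ => 0
  | rel _ _ _ => 0
  | conj f g => max f.degree g.degree
  | disj f g => max f.degree g.degree
  | impl f g => max f.degree g.degree
  | all _ f => f.degree + 1
  | ex _ f => f.degree + 1

end FOForm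

/-- A model of the correspondence language: a domain together with
interpretations of R, R_□, R_◇ and of the unary predicate letters.
(A Θ-model only consults the letters in Θ.) -/
structure Model : Type 1 where
  U : Type
  rel : U → U → Prop
  relBox : U → U → Prop
  relDiam : U → U → Prop
  pred : ℕ → U → Prop

/-- Interpretation of a binary relation symbol in a model. -/
def Model.relOf (M : Model) : RelSym → M.U → M.U → Prop
  | .r => M.rel
  | .box => M.relBox
  | .diam => M.relDiam

/-- Tarskian satisfaction of a formula in a model under an assignment. -/
def Sat (M : Model) : FOForm → (ℕ → M.U) → Prop
  | .falsum, _ => False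
  | .pred n v, α => M.pred n (α v)
  | .rel s v w, α => M.relOf s (α v) (α w)
  | .conj f g, α => Sat M f α ∧ Sat M g α
  | .disj f g, α => Sat M f α ∨ Sat M g α
  | .impl f g, α => Sat M f α → Sat M g α
  | .all v f, α => ∀ u : M.U, Sat M f (Function.update α v u)
  | .ex v f, α => ∃ u : M.U, Sat M f (Function.update α v u)

/-- `M, a ⊨ φ(x)`: φ is true in `M` under any assignment sending `x` to `a`. -/
def SatAt (M : Model) (a : M.U) (x : ℕ) (φ : FOForm) : Prop :=
  ∀ α : ℕ → M.U, α x = a → Sat M φ α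

/-- Logical equivalence of correspondence formulas. -/
def Equiv (φ ψ : FOForm) : Prop :=
  ∀ (M : Model) (α : ℕ → M.U), Sat M φ α ↔ Sat M ψ α

/-- Logical entailment between correspondence formulas. -/
def Entails (φ ψ : FOForm) : Prop :=
  ∀ (M : Model) (α : ℕ → M.U), Sat M φ α → Sat M ψ α

/-- Modal intuitionistic formulas: built from propositional letters `p n`
using ⊥, ∧, ∨, →, □, ◇. -/
inductive MForm : Type
  | bot : MForm
  | prop : ℕ → MForm
  | conj : MForm → MForm → MForm
  | disj : MForm → MForm → MForm
  | impl : MForm → MForm → MForm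
  | box : MForm → MForm
  | diam : MForm → MForm

/-- The (i,j)-standard x-translation `ST_ij`.  `boxOne = true` means the box
clause (□₁) is used (i = 1), `boxOne = false` means (□₂) (i = 2); likewise
`diamOne = true` means the diamond clause (◇₁) (j = 1) and `diamOne = false`
means (◇₂) (j = 2).  Bound variables are chosen fresh as `x+1`, `x+2`. -/
def ST (boxOne diamOne : Bool) : MForm → ℕ → FOForm
  | .bot, _ => .falsum
  | .prop n, x => .pred n x
  | .conj I J, x => .conj (ST boxOne diamOne I x) (ST boxOne diamOne J x)
  | .disj I J, x => .disj (ST boxOne diamOne I x) (ST boxOne diamOne J x)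
  | .impl I J, x =>
      .all (x + 1) (.impl (.rel .r x (x + 1))
        (.impl (ST boxOne diamOne I (x + 1)) (ST boxOne diamOne J (x + 1))))
  | .box I, x =>
      if boxOne then
        .all (x + 1) (.impl (.rel .box x (x + 1)) (ST boxOne diamOne I (x + 1)))
      else
        .all (x + 1) (.impl (.rel .r x (x + 1))
          (.all (x + 2) (.impl (.rel .box (x + 1) (x + 2)) (ST boxOne diamOne I (x + 2)))))
  | .diam I, x =>
      if diamOne then
        .ex (x + 1) (.conj (.rel .diam x (x + 1)) (ST boxOne diamOne I (x + 1)))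
      else
        .all (x + 1) (.impl (.rel .r x (x + 1))
          (.ex (x + 2) (.conj (.rel .diam (x + 1) (x + 2)) (ST boxOne diamOne I (x + 2)))))

/-! ### Conditions on relations between tuples (the k-asimulation conditions).
A relation between the two models is represented by its two directed
components; `N` is the model of the source tuple and `P` that of the target
tuple.  A tuple `(ā_m, a)` is represented as the list `as ++ [a]`, with
`m = as.length`. -/

section TupleConds

variable (N P : Model)

/-- The "p-type" condition: related tuples are nonempty and of equal length. -/
def TypeCond (A : List N.U → List P.U → Prop) : Prop :=
  ∀ as bs, A as bs → as ≠ [] ∧ as.length = bs.length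

/-- (p-base). -/
def BaseCond (Θ : Set ℕ) (A : List N.U → List P.U → Prop) : Prop :=
  ∀ (as : List N.U) (bs : List P.U) (a : N.U) (b : P.U),
    A (as ++ [a]) (bs ++ [b]) → ∀ n ∈ Θ, N.pred n a → P.pred n b

/-- (p-step). -/
def StepCond (k : ℕ) (A : List N.U → List P.U → Prop)
    (Arev : List P.U → List N.U → Prop) : Prop :=
  ∀ (as : List N.U) (bs : List P.U) (a : N.U) (b d : P.U),
    A (as ++ [a]) (bs ++ [b]) → P.rel b d → as.length < k →
    ∃ c : N.U, N.rel a c ∧ A (as ++ [a, c]) (bs ++ [b, d]) ∧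
      Arev (bs ++ [b, d]) (as ++ [a, c])

/-- (p-box-1). -/
def Box1Cond (k : ℕ) (A : List N.U → List P.U → Prop) : Prop :=
  ∀ (as : List N.U) (bs : List P.U) (a : N.U) (b d : P.U),
    A (as ++ [a]) (bs ++ [b]) → P.relBox b d → as.length < k →
    ∃ c : N.U, N.relBox a c ∧ A (as ++ [a, c]) (bs ++ [b, d])

/-- (p-box-2). -/
def Box2Cond (k : ℕ) (A : List N.U → List P.U → Prop) : Prop :=
  ∀ (as : List N.U) (bs : List P.U) (a : N.U) (b d f : P.U),
    A (as ++ [a]) (bs ++ [b]) → P.rel b d → P.relBox d f → as.length + 1 < k →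
    ∃ c e : N.U, N.rel a c ∧ N.relBox c e ∧ A (as ++ [a, c, e]) (bs ++ [b, d, f])

/-- (p-diam-1). -/
def Diam1Cond (k : ℕ) (A : List N.U → List P.U → Prop) : Prop :=
  ∀ (as : List N.U) (bs : List P.U) (a c : N.U) (b : P.U),
    A (as ++ [a]) (bs ++ [b]) → N.relDiam a c → as.length < k →
    ∃ d : P.U, P.relDiam b d ∧ A (as ++ [a, c]) (bs ++ [b, d])

/-- (p-diam-2(1)). -/
def Diam2aCond (k : ℕ) (A B : List N.U → List P.U → Prop) : Prop :=
  ∀ (as : List N.U) (bs : List P.U) (a : N.U) (b d : P.U),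
    A (as ++ [a]) (bs ++ [b]) → P.rel b d → as.length + 1 < k →
    ∃ c : N.U, N.rel a c ∧ B (as ++ [a, c]) (bs ++ [b, d])

/-- (p-diam-2(2)). -/
def Diam2bCond (k : ℕ) (B A : List N.U → List P.U → Prop) : Prop :=
  ∀ (as : List N.U) (bs : List P.U) (a c : N.U) (b : P.U),
    B (as ++ [a]) (bs ++ [b]) → N.relDiam a c → as.length < k →
    ∃ d : P.U, P.relDiam b d ∧ A (as ++ [a, c]) (bs ++ [b, d])

end TupleConds

/-- An (i,1)-modal ⟨(M₁,t),(M₂,u)⟩_k-asimulation (j = 1): a single relation `A`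
given by its two directed components `A12`, `A21`. -/
def IsKAsimD1 (boxOne : Bool) (Θ : Set ℕ) (M₁ M₂ : Model) (t : M₁.U) (u : M₂.U) (k : ℕ)
    (A12 : List M₁.U → List M₂.U → Prop) (A21 : List M₂.U → List M₁.U → Prop) : Prop :=
  TypeCond M₁ M₂ A12 ∧ TypeCond M₂ M₁ A21 ∧
  A12 [t] [u] ∧
  BaseCond M₁ M₂ Θ A12 ∧ BaseCond M₂ M₁ Θ A21 ∧
  StepCond M₁ M₂ k A12 A21 ∧ StepCond M₂ M₁ k A21 A12 ∧
  (if boxOne then Box1Cond M₁ M₂ k A12 ∧ Box1Cond M₂ M₁ k A21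
   else Box2Cond M₁ M₂ k A12 ∧ Box2Cond M₂ M₁ k A21) ∧
  Diam1Cond M₁ M₂ k A12 ∧ Diam1Cond M₂ M₁ k A21

/-- An (i,2)-modal ⟨(M₁,t),(M₂,u)⟩_k-asimulation (j = 2): an ordered pair
(A, B) of relations, each given by its two directed components. -/
def IsKAsimD2 (boxOne : Bool) (Θ : Set ℕ) (M₁ M₂ : Model) (t : M₁.U) (u : M₂.U) (k : ℕ)
    (A12 : List M₁.U → List M₂.U → Prop) (A21 : List M₂.U → List M₁.U → Prop)
    (B12 : List M₁.U → List M₂.U → Prop) (B21 : List M₂.U → List M₁.U → Prop) : Prop :=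
  TypeCond M₁ M₂ A12 ∧ TypeCond M₂ M₁ A21 ∧
  TypeCond M₁ M₂ B12 ∧ TypeCond M₂ M₁ B21 ∧
  A12 [t] [u] ∧
  BaseCond M₁ M₂ Θ A12 ∧ BaseCond M₂ M₁ Θ A21 ∧
  StepCond M₁ M₂ k A12 A21 ∧ StepCond M₂ M₁ k A21 A12 ∧
  (if boxOne then Box1Cond M₁ M₂ k A12 ∧ Box1Cond M₂ M₁ k A21
   else Box2Cond M₁ M₂ k A12 ∧ Box2Cond M₂ M₁ k A21) ∧
  Diam2aCond M₁ M₂ k A12 B12 ∧ Diam2aCond M₂ M₁ k A21 B21 ∧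
  Diam2bCond M₁ M₂ k B12 A12 ∧ Diam2bCond M₂ M₁ k B21 A21

/-- φ(x) is invariant with respect to (i,1)-modal k-asimulations. -/
def KInvariantD1 (boxOne : Bool) (x : ℕ) (φ : FOForm) (k : ℕ) : Prop :=
  ∀ Θ : Set ℕ, (φ.predLetters : Set ℕ) ⊆ Θ →
  ∀ (M₁ M₂ : Model) (t : M₁.U) (u : M₂.U)
    (A12 : List M₁.U → List M₂.U → Prop) (A21 : List M₂.U → List M₁.U → Prop),
    IsKAsimD1 boxOne Θ M₁ M₂ t u k A12 A21 →
    ∀ (a : M₁.U) (b : M₂.U), A12 [a] [b] → SatAt M₁ a x φ → SatAt M₂ b x φ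

/-- φ(x) is invariant with respect to (i,2)-modal k-asimulations. -/
def KInvariantD2 (boxOne : Bool) (x : ℕ) (φ : FOForm) (k : ℕ) : Prop :=
  ∀ Θ : Set ℕ, (φ.predLetters : Set ℕ) ⊆ Θ →
  ∀ (M₁ M₂ : Model) (t : M₁.U) (u : M₂.U)
    (A12 : List M₁.U → List M₂.U → Prop) (A21 : List M₂.U → List M₁.U → Prop)
    (B12 : List M₁.U → List M₂.U → Prop) (B21 : List M₂.U → List M₁.U → Prop),
    IsKAsimD2 boxOne Θ M₁ M₂ t u k A12 A21 B12 B21 →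
    ∀ (a : M₁.U) (b : M₂.U), A12 [a] [b] → SatAt M₁ a x φ → SatAt M₂ b x φ

/-! ### Conditions for asimulations *simpliciter* (relations between elements). -/

section ElemConds

variable (N P : Model)

/-- (base). -/
def BaseCondE (Θ : Set ℕ) (A : N.U → P.U → Prop) : Prop :=
  ∀ (a : N.U) (b : P.U), A a b → ∀ n ∈ Θ, N.pred n a → P.pred n b

/-- (step). -/
def StepCondE (A : N.U → P.U → Prop) (Arev : P.U → N.U → Prop) : Prop :=
  ∀ (a : N.U) (b d : P.U), A a b → P.rel b d →
    ∃ c : N.U, N.rel a c ∧ A c d ∧ Arev d c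

/-- (box-1). -/
def Box1CondE (A : N.U → P.U → Prop) : Prop :=
  ∀ (a : N.U) (b d : P.U), A a b → P.relBox b d →
    ∃ c : N.U, N.relBox a c ∧ A c d

/-- (box-2). -/
def Box2CondE (A : N.U → P.U → Prop) : Prop :=
  ∀ (a : N.U) (b d f : P.U), A a b → P.rel b d → P.relBox d f →
    ∃ c e : N.U, N.rel a c ∧ N.relBox c e ∧ A e f

/-- (diam-1). -/
def Diam1CondE (A : N.U → P.U → Prop) : Prop :=
  ∀ (a c : N.U) (b : P.U), A a b → N.relDiam a c →
    ∃ d : P.U, P.relDiam b d ∧ A c d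

/-- (diam-2(1)). -/
def Diam2aCondE (A B : N.U → P.U → Prop) : Prop :=
  ∀ (a : N.U) (b d : P.U), A a b → P.rel b d →
    ∃ c : N.U, N.rel a c ∧ B c d

/-- (diam-2(2)). -/
def Diam2bCondE (B A : N.U → P.U → Prop) : Prop :=
  ∀ (a c : N.U) (b : P.U), B a b → N.relDiam a c →
    ∃ d : P.U, P.relDiam b d ∧ A c d

end ElemConds

/-- An (i,1)-modal ⟨(M₁,t),(M₂,u)⟩-asimulation (j = 1). -/
def IsAsimD1 (boxOne : Bool) (Θ : Set ℕ) (M₁ M₂ : Model) (t : M₁.U) (u : M₂.U)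
    (A12 : M₁.U → M₂.U → Prop) (A21 : M₂.U → M₁.U → Prop) : Prop :=
  A12 t u ∧
  BaseCondE M₁ M₂ Θ A12 ∧ BaseCondE M₂ M₁ Θ A21 ∧
  StepCondE M₁ M₂ A12 A21 ∧ StepCondE M₂ M₁ A21 A12 ∧
  (if boxOne then Box1CondE M₁ M₂ A12 ∧ Box1CondE M₂ M₁ A21
   else Box2CondE M₁ M₂ A12 ∧ Box2CondE M₂ M₁ A21) ∧
  Diam1CondE M₁ M₂ A12 ∧ Diam1CondE M₂ M₁ A21

/-- An (i,2)-modal ⟨(M₁,t),(M₂,u)⟩-asimulation (j = 2). -/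
def IsAsimD2 (boxOne : Bool) (Θ : Set ℕ) (M₁ M₂ : Model) (t : M₁.U) (u : M₂.U)
    (A12 : M₁.U → M₂.U → Prop) (A21 : M₂.U → M₁.U → Prop)
    (B12 : M₁.U → M₂.U → Prop) (B21 : M₂.U → M₁.U → Prop) : Prop :=
  A12 t u ∧
  BaseCondE M₁ M₂ Θ A12 ∧ BaseCondE M₂ M₁ Θ A21 ∧
  StepCondE M₁ M₂ A12 A21 ∧ StepCondE M₂ M₁ A21 A12 ∧
  (if boxOne then Box1CondE M₁ M₂ A12 ∧ Box1CondE M₂ M₁ A21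
   else Box2CondE M₁ M₂ A12 ∧ Box2CondE M₂ M₁ A21) ∧
  Diam2aCondE M₁ M₂ A12 B12 ∧ Diam2aCondE M₂ M₁ A21 B21 ∧
  Diam2bCondE M₁ M₂ B12 A12 ∧ Diam2bCondE M₂ M₁ B21 A21

/-- φ(x) is invariant with respect to (i,1)-modal asimulations. -/
def InvariantD1 (boxOne : Bool) (x : ℕ) (φ : FOForm) : Prop :=
  ∀ Θ : Set ℕ, (φ.predLetters : Set ℕ) ⊆ Θ →
  ∀ (M₁ M₂ : Model) (t : M₁.U) (u : M₂.U)
    (A12 : M₁.U → M₂.U → Prop) (A21 : M₂.U → M₁.U → Prop),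
    IsAsimD1 boxOne Θ M₁ M₂ t u A12 A21 →
    ∀ (a : M₁.U) (b : M₂.U), A12 a b → SatAt M₁ a x φ → SatAt M₂ b x φ

/-- φ(x) is invariant with respect to (i,2)-modal asimulations. -/
def InvariantD2 (boxOne : Bool) (x : ℕ) (φ : FOForm) : Prop :=
  ∀ Θ : Set ℕ, (φ.predLetters : Set ℕ) ⊆ Θ →
  ∀ (M₁ M₂ : Model) (t : M₁.U) (u : M₂.U)
    (A12 : M₁.U → M₂.U → Prop) (A21 : M₂.U → M₁.U → Prop)
    (B12 : M₁.U → M₂.U → Prop) (B21 : M₂.U → M₁.U → Prop),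
    IsAsimD2 boxOne Θ M₁ M₂ t u A12 A21 B12 B21 →
    ∀ (a : M₁.U) (b : M₂.U), A12 a b → SatAt M₁ a x φ → SatAt M₂ b x φ

/-! ### Types, complete conjunctions, ω-saturation. -/

/-- `int(φ,x,l)`: the set of (2,2)-standard x-translations of modal
intuitionistic formulas which are (Σ_φ,x,l)-formulas. -/
def intSet (φ : FOForm) (x l : ℕ) : Set FOForm :=
  {ψ | (∃ I : MForm, ψ = ST false false I x) ∧
    ψ.predLetters ⊆ φ.predLetters ∧ ψ.freeVars ⊆ {x} ∧ ψ.degree ≤ l}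

/-- `tp_l(φ(x),M,a)`. -/
def tpSet (φ : FOForm) (x l : ℕ) (M : Model) (a : M.U) : Set FOForm :=
  {ψ | ψ ∈ intSet φ x l ∧ SatAt M a x ψ}

/-- Conjunction of a nonempty list of formulas. -/
def listConj : FOForm → List FOForm → FOForm
  | ψ, [] => ψ
  | ψ, χ :: L => FOForm.conj ψ (listConj χ L)

/-- Ψ(x) is a complete (φ,x,k)-conjunction. -/
def IsCompleteConj (φ : FOForm) (x k : ℕ) (Ψ : FOForm) : Prop :=
  (∃ (ψ₀ : FOForm) (L : List FOForm), ψ₀ ∈ intSet φ x k ∧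
    (∀ χ ∈ L, χ ∈ intSet φ x k) ∧ Ψ = listConj ψ₀ L) ∧
  ∃ (M : Model) (a : M.U), SatAt M a x (FOForm.conj Ψ φ) ∧
    ∀ ψ ∈ tpSet φ x k M a, Entails Ψ ψ

/-- `int_x(Θ)` for the (i,j)-standard translation. -/
def intX (Θ : Set ℕ) (boxOne diamOne : Bool) (x : ℕ) : Set FOForm :=
  {ψ | (∃ I : MForm, ψ = ST boxOne diamOne I x) ∧ (ψ.predLetters : Set ℕ) ⊆ Θ}

/-- `tp_x(M,t)` for the (i,j)-standard translation. -/
def tpX (Θ : Set ℕ) (boxOne diamOne : Bool) (x : ℕ) (M : Model) (t : M.U) : Set FOForm :=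
  {ψ | ψ ∈ intX Θ boxOne diamOne x ∧ SatAt M t x ψ}

/-- `imp_x(M,t) = ⋂ { t̄p_x(M,u) : t R_◇ u }` (for the (2,2)-translation). -/
def impX (Θ : Set ℕ) (x : ℕ) (M : Model) (t : M.U) : Set FOForm :=
  {ψ | ψ ∈ intX Θ false false x ∧ ∀ u : M.U, M.relDiam t u → ¬ SatAt M u x ψ}

/-- ω-saturation: for every finite tuple of parameters (the first `n` values of
an assignment `α`) and every set `Γ` of formulas with finitely many free
variables beyond the parameters, if `Γ` is consistent with the first-order
theory of `[M,ā]` (i.e. satisfiable together with it in some model), then `Γ`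
is realized in `[M,ā]`. -/
def OmegaSaturated (M : Model) : Prop :=
  ∀ (n : ℕ) (α : ℕ → M.U) (Γ : Set FOForm),
    (∃ k : ℕ, ∀ γ ∈ Γ, γ.freeVars ⊆ Finset.range (n + k)) →
    (∃ (N : Model) (β : ℕ → N.U),
      (∀ ψ : FOForm, ψ.freeVars ⊆ Finset.range n → Sat M ψ α → Sat N ψ β) ∧
      ∀ γ ∈ Γ, Sat N γ β) →
    ∃ α' : ℕ → M.U, (∀ i < n, α' i = α i) ∧ ∀ γ ∈ Γ, Sat M γ α'

/-! ### Relativization to a class κ of models. -/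

/-- κ(Θ) is first-order axiomatizable for every finite Θ (with R ∈ Θ): for
every finite set `S` of unary predicate letters there is a set of Θ-sentences
axiomatizing membership in κ. -/
def FinAxiomatizable (κ : Set Model) : Prop :=
  ∀ S : Finset ℕ, ∃ Ax : Set FOForm,
    (∀ ψ ∈ Ax, ψ.freeVars = ∅ ∧ (ψ.predLetters : Set ℕ) ⊆ (S : Set ℕ)) ∧
    ∀ M : Model, M ∈ κ ↔ ∀ ψ ∈ Ax, ∀ α : ℕ → M.U, Sat M ψ α

/-- φ κ-follows from ψ: {ψ, ¬φ} is not κ-satisfiable. -/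
def KappaFollows (κ : Set Model) (ψ φ : FOForm) : Prop :=
  ¬ ∃ M : Model, M ∈ κ ∧ ∃ α : ℕ → M.U, Sat M ψ α ∧ ¬ Sat M φ α

/-- κ-equivalence of formulas. -/
def KappaEquiv (κ : Set Model) (φ ψ : FOForm) : Prop :=
  KappaFollows κ φ ψ ∧ KappaFollows κ ψ φ

/-- φ(x) is κ-invariant with respect to (i,1)-modal asimulations. -/
def KappaInvariantD1 (κ : Set Model) (boxOne : Bool) (x : ℕ) (φ : FOForm) : Prop :=
  ∀ Θ : Set ℕ, (φ.predLetters : Set ℕ) ⊆ Θ →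
  ∀ (M₁ M₂ : Model), M₁ ∈ κ → M₂ ∈ κ →
  ∀ (t : M₁.U) (u : M₂.U)
    (A12 : M₁.U → M₂.U → Prop) (A21 : M₂.U → M₁.U → Prop),
    IsAsimD1 boxOne Θ M₁ M₂ t u A12 A21 →
    ∀ (a : M₁.U) (b : M₂.U), A12 a b → SatAt M₁ a x φ → SatAt M₂ b x φ

/-- φ(x) is κ-invariant with respect to (i,2)-modal asimulations. -/
def KappaInvariantD2 (κ : Set Model) (boxOne : Bool) (x : ℕ) (φ : FOForm) : Prop :=
  ∀ Θ : Set ℕ, (φ.predLetters : Set ℕ) ⊆ Θ →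
  ∀ (M₁ M₂ : Model), M₁ ∈ κ → M₂ ∈ κ →
  ∀ (t : M₁.U) (u : M₂.U)
    (A12 : M₁.U → M₂.U → Prop) (A21 : M₂.U → M₁.U → Prop)
    (B12 : M₁.U → M₂.U → Prop) (B21 : M₂.U → M₁.U → Prop),
    IsAsimD2 boxOne Θ M₁ M₂ t u A12 A21 B12 B21 →
    ∀ (a : M₁.U) (b : M₂.U), A12 a b → SatAt M₁ a x φ → SatAt M₂ b x φ

/-- φ(x) is κ-invariant with respect to (i,j)-modal asimulations
(`diamOne = true` means j = 1). -/
def KappaInvariant (κ : Set Model) (boxOne diamOne : Bool) (x : ℕ) (φ : FOForm) : Prop :=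
  if diamOne then KappaInvariantD1 κ boxOne x φ else KappaInvariantD2 κ boxOne x φ


/-! ### Direct semantics of modal formulas -/

/-- Propositional letters of a modal formula. -/
def letters : MForm → Finset ℕ
  | .bot => ∅
  | .prop n => {n}
  | .conj I J => letters I ∪ letters J
  | .disj I J => letters I ∪ letters J
  | .impl I J => letters I ∪ letters J
  | .box I => letters I
  | .diam I => letters I

/-- Direct (2,2)-semantics of modal formulas. -/
def MSat (M : Model) : MForm → M.U → Prop
  | .bot, _ => False
  | .prop n, a => M.pred n a
  | .conj I J, a => MSat M I a ∧ MSat M J a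
  | .disj I J, a => MSat M I a ∨ MSat M J a
  | .impl I J, a => ∀ b, M.rel a b → MSat M I b → MSat M J b
  | .box I, a => ∀ b, M.rel a b → ∀ c, M.relBox b c → MSat M I c
  | .diam I, a => ∀ b, M.rel a b → ∃ c, M.relDiam b c ∧ MSat M I c

theorem predLetters_ST (I : MForm) (x : ℕ) :
    (ST false false I x).predLetters = letters I := by
  induction I generalizing x <;> simp_all [ST, FOForm.predLetters, letters]

theorem freeVars_ST (I : MForm) (x : ℕ) : (ST false false I x).freeVars ⊆ {x} := by
  induction I generalizing x with
  | bot => simp [ST, FOForm.freeVars]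
  | prop n => simp [ST, FOForm.freeVars]
  | conj I J hI hJ => exact Finset.union_subset (hI x) (hJ x)
  | disj I J hI hJ => exact Finset.union_subset (hI x) (hJ x)
  | impl I J hI hJ =>
    intro v hv
    have h1 := @hI (x + 1) v
    have h2 := @hJ (x + 1) v
    simp [ST, FOForm.freeVars] at hv h1 h2 ⊢
    tauto
  | box I hI =>
    intro v hv
    have h1 := @hI (x + 2) v
    simp [ST, FOForm.freeVars] at hv h1 ⊢
    tauto
  | diam I hI =>
    intro v hv
    have h1 := @hI (x + 2) v
    simp [ST, FOForm.freeVars] at hv h1 ⊢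
    tauto

theorem sat_ST (M : Model) (I : MForm) (x : ℕ) (α : ℕ → M.U) :
    Sat M (ST false false I x) α ↔ MSat M I (α x) := by
  induction I generalizing x α <;>
    simp_all [ST, Sat, MSat, Model.relOf]

theorem satAt_ST (M : Model) (I : MForm) (x : ℕ) (a : M.U) :
    SatAt M a x (ST false false I x) ↔ MSat M I a := by
  constructor
  · intro h
    simpa [sat_ST] using h (fun _ => a) rfl
  · intro h α hα
    rw [sat_ST, hα]
    exact h

theorem tp_subset_iff (Θ : Set ℕ) (x : ℕ) (M N : Model) (a : M.U) (b : N.U) :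
    tpX Θ false false x M a ⊆ tpX Θ false false x N b ↔
      ∀ I, (letters I : Set ℕ) ⊆ Θ → MSat M I a → MSat N I b := by
  constructor
  · intro h I hI ha
    have := @h (ST false false I x)
      ⟨⟨⟨I, rfl⟩, by rwa [predLetters_ST]⟩, (satAt_ST M I x a).2 ha⟩
    exact (satAt_ST N I x b).1 this.2
  · rintro h _ ⟨⟨⟨I, rfl⟩, hI⟩, ha⟩
    refine ⟨⟨⟨I, rfl⟩, hI⟩, (satAt_ST N I x b).2 (h I ?_ ((satAt_ST M I x a).1 ha))⟩
    rwa [predLetters_ST] at hI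

theorem imp_subset_iff (Θ : Set ℕ) (x : ℕ) (M N : Model) (a : M.U) (b : N.U) :
    impX Θ x M a ⊆ impX Θ x N b ↔
      ∀ I, (letters I : Set ℕ) ⊆ Θ → (∀ u, M.relDiam a u → ¬ MSat M I u) →
        ∀ u, N.relDiam b u → ¬ MSat N I u := by
  constructor
  · intro h I hI ha u hu hs
    have := @h (ST false false I x)
      ⟨⟨⟨I, rfl⟩, by rwa [predLetters_ST]⟩, fun v hv => by
        rw [satAt_ST]; exact ha v hv⟩
    exact this.2 u hu ((satAt_ST N I x u).2 hs)
  · rintro h _ ⟨⟨⟨I, rfl⟩, hI⟩, ha⟩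
    refine ⟨⟨⟨I, rfl⟩, hI⟩, fun u hu => ?_⟩
    rw [satAt_ST]
    rw [predLetters_ST] at hI
    exact h I hI (fun v hv => by rw [← satAt_ST M I x]; exact ha v hv) u hu

/-! ### Finite conjunctions and disjunctions -/

/-- Conjunction of a list of modal formulas. -/
def bigConj : List MForm → MForm
  | [] => .impl .bot .bot
  | I :: L => .conj I (bigConj L)

/-- Disjunction of a list of modal formulas. -/
def bigDisj : List MForm → MForm
  | [] => .bot
  | I :: L => .disj I (bigDisj L)

theorem msat_bigConj (M : Model) (L : List MForm) (a : M.U) :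
    MSat M (bigConj L) a ↔ ∀ I ∈ L, MSat M I a := by
  induction L <;> simp_all [bigConj, MSat]

theorem msat_bigDisj (M : Model) (L : List MForm) (a : M.U) :
    MSat M (bigDisj L) a ↔ ∃ I ∈ L, MSat M I a := by
  induction L <;> simp_all [bigDisj, MSat]

theorem letters_bigConj (Θ : Set ℕ) (L : List MForm)
    (h : ∀ I ∈ L, (letters I : Set ℕ) ⊆ Θ) : (letters (bigConj L) : Set ℕ) ⊆ Θ := by
  induction L <;> simp_all [bigConj, letters]

theorem letters_bigDisj (Θ : Set ℕ) (L : List MForm)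
    (h : ∀ I ∈ L, (letters I : Set ℕ) ⊆ Θ) : (letters (bigDisj L) : Set ℕ) ⊆ Θ := by
  induction L <;> simp_all [bigDisj, letters]

/-! ### Compactness via ultrapowers -/

theorem sat_congr (M : Model) (φ : FOForm) (α β : ℕ → M.U)
    (h : ∀ v ∈ φ.freeVars, α v = β v) : Sat M φ α ↔ Sat M φ β := by
  induction φ generalizing α β with
  | falsum => simp [Sat]
  | pred n v => simp_all [Sat, FOForm.freeVars]
  | rel s v w => simp_all [Sat, FOForm.freeVars]
  | conj f g hf hg =>
    simp only [FOForm.freeVars, Finset.mem_union] at h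
    simp only [Sat]
    rw [hf α β (fun v hv => h v (Or.inl hv)), hg α β (fun v hv => h v (Or.inr hv))]
  | disj f g hf hg =>
    simp only [FOForm.freeVars, Finset.mem_union] at h
    simp only [Sat]
    rw [hf α β (fun v hv => h v (Or.inl hv)), hg α β (fun v hv => h v (Or.inr hv))]
  | impl f g hf hg =>
    simp only [FOForm.freeVars, Finset.mem_union] at h
    simp only [Sat]
    rw [hf α β (fun v hv => h v (Or.inl hv)), hg α β (fun v hv => h v (Or.inr hv))]
  | all w f hf =>
    simp only [FOForm.freeVars, Finset.mem_sdiff, Finset.mem_singleton] at h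
    simp only [Sat]
    refine forall_congr' fun u => hf _ _ fun v hv => ?_
    by_cases hvw : v = w
    · subst hvw; simp
    · simp [hvw, h v ⟨hv, hvw⟩]
  | ex w f hf =>
    simp only [FOForm.freeVars, Finset.mem_sdiff, Finset.mem_singleton] at h
    simp only [Sat]
    refine exists_congr fun u => hf _ _ fun v hv => ?_
    by_cases hvw : v = w
    · subst hvw; simp
    · simp [hvw, h v ⟨hv, hvw⟩]

/-- Ultrapower (no quotient is needed, as the language has no identity). -/
def ultraModel (M : Model) {ι : Type} (F : Ultrafilter ι) : Model where
  U := ι → M.U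
  rel f g := ∀ᶠ i in (F : Filter ι), M.rel (f i) (g i)
  relBox f g := ∀ᶠ i in (F : Filter ι), M.relBox (f i) (g i)
  relDiam f g := ∀ᶠ i in (F : Filter ι), M.relDiam (f i) (g i)
  pred n f := ∀ᶠ i in (F : Filter ι), M.pred n (f i)

theorem update_eval {V ι : Type} (β : ℕ → ι → V) (w : ℕ) (u : ι → V) (i : ι) :
    (fun v => Function.update β w u v i) = Function.update (fun v => β v i) w (u i) := by
  funext v
  by_cases hv : v = w
  · subst hv; simp
  · simp [hv]

theorem los_ex (M : Model) {ι : Type} (F : Ultrafilter ι) (p : ι → M.U → Prop) :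
    (∃ u : ι → M.U, ∀ᶠ i in (F : Filter ι), p i (u i)) ↔
      ∀ᶠ i in (F : Filter ι), ∃ u, p i u := by
  constructor
  · rintro ⟨u, hu⟩
    exact hu.mono fun i hi => ⟨u i, hi⟩
  · intro h
    obtain ⟨j, u0, _⟩ := h.exists
    classical
    refine ⟨fun i => if hi : ∃ u, p i u then hi.choose else u0, h.mono fun i hi => ?_⟩
    simp only [hi, dite_true]
    exact hi.choose_spec

theorem los (M : Model) {ι : Type} (F : Ultrafilter ι) (φ : FOForm) (β : ℕ → ι → M.U) :
    Sat (ultraModel M F) φ β ↔ ∀ᶠ i in (F : Filter ι), Sat M φ (fun v => β v i) := by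
  induction φ generalizing β with
  | falsum => simp [Sat, F.neBot.ne]
  | pred n v => rfl
  | rel s v w => cases s <;> rfl
  | conj f g hf hg =>
    simp only [Sat]
    rw [hf, hg, Filter.eventually_and]
  | disj f g hf hg =>
    simp only [Sat]
    rw [hf, hg, Ultrafilter.eventually_or]
  | impl f g hf hg =>
    simp only [Sat]
    rw [hf, hg, Ultrafilter.eventually_imp]
  | all w f hf =>
    simp only [Sat]
    have key : (∃ u : ι → M.U, ¬ Sat (ultraModel M F) f (Function.update β w u)) ↔
        ∀ᶠ i in (F : Filter ι), ∃ u, ¬ Sat M f (Function.update (fun v => β v i) w u) := by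
      rw [← los_ex]
      refine exists_congr fun u => ?_
      have h1 := not_congr (hf (Function.update β w u))
      rw [← Ultrafilter.eventually_not] at h1
      simp only [update_eval] at h1
      exact h1
    have key2 := not_congr key
    rw [← Ultrafilter.eventually_not] at key2
    simp only [not_exists, not_not] at key2
    exact key2
  | ex w f hf =>
    simp only [Sat]
    rw [← los_ex]
    refine exists_congr (α := ι → M.U) fun u => ?_
    have h1 := hf (Function.update β w u)
    simp only [update_eval] at h1
    exact h1

theorem saturated_realize (M : Model) (hM : OmegaSaturated M) (n k : ℕ) (α : ℕ → M.U)
    {ι : Type} (γ0 : FOForm) (g : ι → FOForm)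
    (h0 : γ0.freeVars ⊆ Finset.range (n + k))
    (hg : ∀ i, (g i).freeVars ⊆ Finset.range (n + k))
    (hfin : ∀ s : Finset ι, ∃ α' : ℕ → M.U, (∀ i < n, α' i = α i) ∧ Sat M γ0 α' ∧
      ∀ i ∈ s, Sat M (g i) α') :
    ∃ α' : ℕ → M.U, (∀ i < n, α' i = α i) ∧ Sat M γ0 α' ∧ ∀ i, Sat M (g i) α' := by
  choose A hA1 hA2 hA3 using hfin
  let F : Ultrafilter (Finset ι) := Ultrafilter.of Filter.atTop
  have hF : (F : Filter (Finset ι)) ≤ Filter.atTop := Ultrafilter.of_le _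
  obtain ⟨α', h1, h2⟩ := hM n α (insert γ0 (Set.range g)) ⟨k, by
      rintro γ (rfl | ⟨i, rfl⟩)
      · exact h0
      · exact hg i⟩
    ⟨ultraModel M F, fun v s => A s v, fun ψ hψ hs => by
      rw [los]
      refine Filter.Eventually.of_forall fun s => ?_
      rw [sat_congr M ψ _ α]
      · exact hs
      · intro v hv
        exact hA1 s v (Finset.mem_range.1 (hψ hv)), by
      rintro γ (rfl | ⟨i, rfl⟩)
      · rw [los]
        exact Filter.Eventually.of_forall fun s => hA2 s
      · rw [los]
        have : ∀ᶠ s in Filter.atTop, ({i} : Finset ι) ≤ s := Filter.eventually_ge_atTop _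
        exact (this.filter_mono hF).mono fun s hs => hA3 s i (hs (Finset.mem_singleton_self i))⟩
  exact ⟨α', h1, h2 _ (Set.mem_insert _ _), fun i => h2 _ (Set.mem_insert_of_mem _ ⟨i, rfl⟩)⟩

/-! ### The asimulation conditions -/

theorem freeVars_ST_range (I : MForm) (x m : ℕ) (h : x < m) :
    (ST false false I x).freeVars ⊆ Finset.range m :=
  (freeVars_ST I x).trans (by simpa using h)

/-- The assignment sending 0, 1 and all other variables to a, c, e. -/
def asg {V : Type} (a c e : V) : ℕ → V
  | 0 => a
  | 1 => c
  | _ => e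

theorem step_aux (Θ : Set ℕ) (x : ℕ) (M N : Model) (hM : OmegaSaturated M) :
    StepCondE M N (fun a b => tpX Θ false false x M a ⊆ tpX Θ false false x N b)
      (fun b a => tpX Θ false false x N b ⊆ tpX Θ false false x M a) := by
  classical
  intro a b d hab hbd
  simp only [tp_subset_iff] at hab ⊢
  obtain ⟨α', h1, h2, h3⟩ := saturated_realize M hM 1 2 (fun _ => a)
    (ι := {I : MForm // (letters I : Set ℕ) ⊆ Θ}) (.rel .r 0 1)
    (fun I => if MSat N I.1 d then ST false false I.1 1
      else .impl (ST false false I.1 1) .falsum)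
    (by simp [FOForm.freeVars, Finset.insert_subset_iff])
    (by
      intro I
      have := freeVars_ST_range I.1 1 (1 + 2) (by norm_num)
      split_ifs
      · exact this
      · simpa [FOForm.freeVars] using this)
    (by
      intro s
      let L := s.toList.map Subtype.val
      have hL : ∀ I ∈ L, (letters I : Set ℕ) ⊆ Θ := by
        intro I hI
        obtain ⟨J, _, rfl⟩ := List.mem_map.1 hI
        exact J.2
      let L1 := L.filter (fun I => MSat N I d)
      let L2 := L.filter (fun I => ¬ MSat N I d)
      have hb : ¬ MSat N (.impl (bigConj L1) (bigDisj L2)) b := by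
        intro h
        have := h d hbd ((msat_bigConj _ _ _).2 (by
          intro I hI
          simpa using (List.mem_filter.1 hI).2))
        obtain ⟨I, hI, hI2⟩ := (msat_bigDisj _ _ _).1 this
        have := (List.mem_filter.1 hI).2
        simp at this
        exact this hI2
      have ha : ¬ MSat M (.impl (bigConj L1) (bigDisj L2)) a := by
        intro h
        refine hb (hab _ ?_ h)
        simp only [letters, Finset.coe_union]
        exact Set.union_subset
          (letters_bigConj Θ _ fun I hI => hL I (List.mem_filter.1 hI).1)
          (letters_bigDisj Θ _ fun I hI => hL I (List.mem_filter.1 hI).1)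
      simp only [MSat, not_forall] at ha
      obtain ⟨c, hac, hc1, hc2⟩ := ha
      rw [msat_bigConj] at hc1
      rw [msat_bigDisj] at hc2
      refine ⟨asg a c c, fun i hi => ?_, hac, fun I hI => ?_⟩
      · obtain rfl : i = 0 := by omega
        rfl
      · have hIL : I.1 ∈ L := List.mem_map.2 ⟨I, by simpa using hI, rfl⟩
        split_ifs with hd
        · rw [sat_ST]
          exact hc1 _ (List.mem_filter.2 ⟨hIL, by simpa using hd⟩)
        · simp only [Sat]
          rw [sat_ST]
          exact fun hc => hc2 ⟨_, List.mem_filter.2 ⟨hIL, by simpa using hd⟩, hc⟩)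
  have e0 : α' 0 = a := h1 0 (by norm_num)
  refine ⟨α' 1, ?_, fun I hI hc => ?_, fun I hI hd => ?_⟩
  · simpa [Sat, Model.relOf, e0] using h2
  · by_contra hd
    have := h3 ⟨I, hI⟩
    simp only [hd, if_false, Sat, sat_ST] at this
    exact this hc
  · have := h3 ⟨I, hI⟩
    simpa only [hd, if_true, sat_ST] using this

theorem box_aux (Θ : Set ℕ) (x : ℕ) (M N : Model) (hM : OmegaSaturated M) :
    Box2CondE M N (fun a b => tpX Θ false false x M a ⊆ tpX Θ false false x N b) := by
  intro a b d f hab hbd hdf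
  simp only [tp_subset_iff] at hab ⊢
  obtain ⟨α', h1, h2, h3⟩ := saturated_realize M hM 1 2 (fun _ => a)
    (ι := {I : MForm // (letters I : Set ℕ) ⊆ Θ ∧ ¬ MSat N I f})
    (.conj (.rel .r 0 1) (.rel .box 1 2))
    (fun I => .impl (ST false false I.1 2) .falsum)
    (by simp [FOForm.freeVars, Finset.insert_subset_iff])
    (by
      intro I
      have := freeVars_ST_range I.1 2 (1 + 2) (by norm_num)
      simpa [FOForm.freeVars] using this)
    (by
      intro s
      let L := s.toList.map Subtype.val
      have hL : ∀ I ∈ L, (letters I : Set ℕ) ⊆ Θ ∧ ¬ MSat N I f := by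
        intro I hI
        obtain ⟨J, _, rfl⟩ := List.mem_map.1 hI
        exact J.2
      have ha : ¬ MSat M (.box (bigDisj L)) a := by
        intro h
        have hb := hab _ (by
          simp only [letters]
          exact letters_bigDisj Θ _ fun I hI => (hL I hI).1) h
        obtain ⟨I, hI, hI2⟩ := (msat_bigDisj _ _ _).1 (hb d hbd f hdf)
        exact (hL I hI).2 hI2
      simp only [MSat, not_forall] at ha
      obtain ⟨c, hac, e, hce, he⟩ := ha
      rw [msat_bigDisj] at he
      refine ⟨asg a c e, fun i hi => ?_, ⟨hac, hce⟩, fun I hI => ?_⟩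
      · obtain rfl : i = 0 := by omega
        rfl
      · have hIL : I.1 ∈ L := List.mem_map.2 ⟨I, by simpa using hI, rfl⟩
        simp only [Sat]
        rw [sat_ST]
        exact fun hc => he ⟨_, hIL, hc⟩)
  have e0 : α' 0 = a := h1 0 (by norm_num)
  simp only [Sat, Model.relOf, e0] at h2
  refine ⟨α' 1, α' 2, h2.1, h2.2, fun I hI hc => ?_⟩
  by_contra hd
  have := h3 ⟨I, hI, hd⟩
  simp only [Sat, sat_ST] at this
  exact this hc

theorem diam_a_aux (Θ : Set ℕ) (x : ℕ) (M N : Model) (hM : OmegaSaturated M) :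
    Diam2aCondE M N (fun a b => tpX Θ false false x M a ⊆ tpX Θ false false x N b)
      (fun a b => impX Θ x N b ⊆ impX Θ x M a) := by
  intro a b d hab hbd
  simp only [tp_subset_iff, imp_subset_iff] at hab ⊢
  obtain ⟨α', h1, h2, h3⟩ := saturated_realize M hM 1 2 (fun _ => a)
    (ι := {I : MForm // (letters I : Set ℕ) ⊆ Θ ∧ ∀ u, N.relDiam d u → ¬ MSat N I u})
    (.rel .r 0 1)
    (fun I => .all 2 (.impl (.rel .diam 1 2) (.impl (ST false false I.1 2) .falsum)))
    (by simp [FOForm.freeVars, Finset.insert_subset_iff])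
    (by
      intro I v hv
      have this : v ∈ _ → v ∈ _ := fun h => freeVars_ST_range I.1 2 (1 + 2) (by norm_num) h
      simp [FOForm.freeVars] at hv this ⊢
      rcases hv with ⟨h | h | h, _⟩
      · omega
      · omega
      · exact this h)
    (by
      intro s
      let L := s.toList.map Subtype.val
      have hL : ∀ I ∈ L, (letters I : Set ℕ) ⊆ Θ ∧ ∀ u, N.relDiam d u → ¬ MSat N I u := by
        intro I hI
        obtain ⟨J, _, rfl⟩ := List.mem_map.1 hI
        exact J.2
      have ha : ¬ MSat M (.diam (bigDisj L)) a := by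
        intro h
        have hb := hab _ (by
          simp only [letters]
          exact letters_bigDisj Θ _ fun I hI => (hL I hI).1) h
        obtain ⟨u, hdu, hu⟩ := hb d hbd
        obtain ⟨I, hI, hI2⟩ := (msat_bigDisj _ _ _).1 hu
        exact (hL I hI).2 u hdu hI2
      simp only [MSat, not_forall] at ha
      obtain ⟨c, hac, hc⟩ := ha
      refine ⟨asg a c c, fun i hi => ?_, hac, fun I hI => ?_⟩
      · obtain rfl : i = 0 := by omega
        rfl
      · have hIL : I.1 ∈ L := List.mem_map.2 ⟨I, by simpa using hI, rfl⟩
        simp only [Sat, sat_ST]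
        intro u hu hIu
        simp only [Function.update_self] at hIu
        exact hc ⟨u, by simpa [Model.relOf, asg] using hu,
          (msat_bigDisj _ _ _).2 ⟨_, hIL, hIu⟩⟩)
  have e0 : α' 0 = a := h1 0 (by norm_num)
  simp only [Sat, Model.relOf, e0] at h2
  refine ⟨α' 1, h2, fun I hI hd u hu hIu => ?_⟩
  have := h3 ⟨I, hI, hd⟩
  simp only [Sat, sat_ST] at this
  exact this u (by simpa [Model.relOf] using hu) (by simpa using hIu)

theorem diam_b_aux (Θ : Set ℕ) (x : ℕ) (M N : Model) (hN : OmegaSaturated N) :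
    Diam2bCondE M N (fun a b => impX Θ x N b ⊆ impX Θ x M a)
      (fun a b => tpX Θ false false x M a ⊆ tpX Θ false false x N b) := by
  intro a c b hab hac
  simp only [tp_subset_iff, imp_subset_iff] at hab ⊢
  obtain ⟨α', h1, h2, h3⟩ := saturated_realize N hN 1 2 (fun _ => b)
    (ι := {I : MForm // (letters I : Set ℕ) ⊆ Θ ∧ MSat M I c})
    (.rel .diam 0 1)
    (fun I => ST false false I.1 1)
    (by simp [FOForm.freeVars, Finset.insert_subset_iff])
    (fun I => freeVars_ST_range I.1 1 (1 + 2) (by norm_num))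
    (by
      intro s
      let L := s.toList.map Subtype.val
      have hL : ∀ I ∈ L, (letters I : Set ℕ) ⊆ Θ ∧ MSat M I c := by
        intro I hI
        obtain ⟨J, _, rfl⟩ := List.mem_map.1 hI
        exact J.2
      have hb : ∃ d, N.relDiam b d ∧ MSat N (bigConj L) d := by
        by_contra hcon
        refine hab (bigConj L) (letters_bigConj Θ _ fun I hI => (hL I hI).1)
          (fun u hu hs => hcon ⟨u, hu, hs⟩) c hac ?_
        exact (msat_bigConj _ _ _).2 fun I hI => (hL I hI).2
      obtain ⟨d, hbd, hd⟩ := hb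
      rw [msat_bigConj] at hd
      refine ⟨asg b d d, fun i hi => ?_, hbd, fun I hI => ?_⟩
      · obtain rfl : i = 0 := by omega
        rfl
      · have hIL : I.1 ∈ L := List.mem_map.2 ⟨I, by simpa using hI, rfl⟩
        rw [sat_ST]
        exact hd _ hIL)
  have e0 : α' 0 = b := h1 0 (by norm_num)
  simp only [Sat, Model.relOf, e0] at h2
  refine ⟨α' 1, h2, fun I hI hc => ?_⟩
  have := h3 ⟨I, hI, hc⟩
  rwa [sat_ST] at this

theorem base_aux (Θ : Set ℕ) (x : ℕ) (M N : Model) :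
    BaseCondE M N Θ (fun a b => tpX Θ false false x M a ⊆ tpX Θ false false x N b) := by
  intro a b hab n hn hp
  simp only [tp_subset_iff] at hab
  exact hab (.prop n) (by simpa [letters] using hn) hp

/-- **Key Lemma 3 (case (2,2)).**  If M₁, M₂ are ω-saturated Θ-models and
tp_x(M₁,t) ⊆ tp_x(M₂,t'), then the pair (A,B) with
a A b ⇔ tp_x(M_p,a) ⊆ tp_x(M_q,b) and a B b ⇔ imp_x(M_q,b) ⊆ imp_x(M_p,a)
is a (2,2)-modal ⟨(M₁,t),(M₂,t')⟩-asimulation. -/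
theorem statement_14 (Θ : Set ℕ) (M₁ M₂ : Model)
    (h1 : OmegaSaturated M₁) (h2 : OmegaSaturated M₂) (x : ℕ)
    (t : M₁.U) (t' : M₂.U)
    (h : tpX Θ false false x M₁ t ⊆ tpX Θ false false x M₂ t') :
    IsAsimD2 false Θ M₁ M₂ t t'
      (fun a b => tpX Θ false false x M₁ a ⊆ tpX Θ false false x M₂ b)
      (fun b a => tpX Θ false false x M₂ b ⊆ tpX Θ false false x M₁ a)
      (fun a b => impX Θ x M₂ b ⊆ impX Θ x M₁ a)
      (fun b a => impX Θ x M₁ a ⊆ impX Θ x M₂ b) := by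
  exact ⟨h, base_aux Θ x M₁ M₂, base_aux Θ x M₂ M₁, step_aux Θ x M₁ M₂ h1, step_aux Θ x M₂ M₁ h2,
    ⟨box_aux Θ x M₁ M₂ h1, box_aux Θ x M₂ M₁ h2⟩,
    diam_a_aux Θ x M₁ M₂ h1, diam_a_aux Θ x M₂ M₁ h2,
    diam_b_aux Θ x M₁ M₂ h2, diam_b_aux Θ x M₂ M₁ h1⟩

end ModalIntAsim
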